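/- Let s be a non-deadlock global state of a DMC and let E(s) be the set of actions enabled at s. Then the map sending each choice function c, which assigns to every a ∈ E(s) an a-state c(a) with π^a(s_a)(c(a)) > 0, to the u-successor of s for the maximal step u = { (s_a, a, c(a)) | a ∈ E(s) }, is a bijection onto the set of successors of s. Consequently, the number of successors of s equals ∏_{a ∈ E(s)} |{ v' | π^a(s_a)(v') > 0 }|, while the number of events enabled at s equals ∑_{a ∈ E(s)} |{ v' | π^a(s_a)(v') > 0 }|. -/

import Mathlib

/-- A probabilistic asynchronous system over agents `{1,…,n}` with local state
spaces `S i`, actions `A`, locations `loc`, enabling sets `en` and probabilistic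
transition functions `prob`. -/
structure PAS (n : ℕ) (A : Type) (S : Fin n → Type) [Fintype A] [∀ i, Fintype (S i)] where
  loc : A → Finset (Fin n)
  loc_nonempty : ∀ a, (loc a).Nonempty
  en : ∀ a : A, Set (∀ i : {j // j ∈ loc a}, S i.1)
  prob : ∀ a : A, (∀ i : {j // j ∈ loc a}, S i.1) → (∀ i : {j // j ∈ loc a}, S i.1) → ℝ
  prob_nonneg : ∀ a v v', v ∈ en a → 0 ≤ prob a v v'
  prob_sum : ∀ a v, v ∈ en a →
    ∑ v' : (∀ i : {j // j ∈ loc a}, S i.1), prob a v v' = 1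

namespace PAS

variable {n : ℕ} {A : Type} {S : Fin n → Type} [Fintype A] [∀ i, Fintype (S i)]

/-- Projection of a global state to an `a`-state. -/
def projA (P : PAS n A S) (a : A) (s : ∀ i, S i) : ∀ i : {j // j ∈ P.loc a}, S i.1 :=
  fun i => s i.1

/-- Action `a` is enabled at global state `s`. -/
def enabledA (P : PAS n A S) (a : A) (s : ∀ i, S i) : Prop := P.projA a s ∈ P.en a

/-- An event `(v, a, v')` with `v ∈ en a` and `π^a(v)(v') > 0`. -/
structure Event (P : PAS n A S) where
  act : A
  src : ∀ i : {j // j ∈ P.loc act}, S i.1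
  tgt : ∀ i : {j // j ∈ P.loc act}, S i.1
  src_en : src ∈ P.en act
  prob_pos : 0 < P.prob act src tgt

/-- The probability attached to an event. -/
def Event.p {P : PAS n A S} (e : P.Event) : ℝ := P.prob e.act e.src e.tgt

/-- Event `e` is enabled at global state `s`. -/
def Event.enabled {P : PAS n A S} (e : P.Event) (s : ∀ i, S i) : Prop :=
  P.projA e.act s = e.src

/-- The transition relation `s →_e s'`. -/
def Event.trans {P : PAS n A S} (e : P.Event) (s s' : ∀ i, S i) : Prop :=
  e.enabled s ∧ (∀ i : {j // j ∈ P.loc e.act}, s' i.1 = e.tgt i) ∧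
    ∀ j, j ∉ P.loc e.act → s' j = s j

/-- Events are independent iff their locations are disjoint. -/
def indep {P : PAS n A S} (e e' : P.Event) : Prop :=
  P.loc e.act ∩ P.loc e'.act = ∅

/-- `u` is a step at `s`: a nonempty finite set of events, each enabled at `s`,
pairwise independent. -/
def isStep (P : PAS n A S) (u : Set P.Event) (s : ∀ i, S i) : Prop :=
  u.Finite ∧ u.Nonempty ∧ (∀ e ∈ u, Event.enabled e s) ∧
    ∀ e ∈ u, ∀ e' ∈ u, e ≠ e' → indep e e'

/-- `u` is a maximal step at `s`. -/
def isMaxStep (P : PAS n A S) (u : Set P.Event) (s : ∀ i, S i) : Prop :=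
  P.isStep u s ∧ ∀ e ∉ u, ¬ P.isStep (insert e u) s

/-- `loc(u) = ⋃_{e ∈ u} loc(e)`. -/
def locU (P : PAS n A S) (u : Set P.Event) : Set (Fin n) :=
  ⋃ e ∈ u, (P.loc e.act : Set (Fin n))

/-- `s'` is a `u`-successor of `s`. -/
def uSucc (P : PAS n A S) (u : Set P.Event) (s s' : ∀ i, S i) : Prop :=
  (∀ e ∈ u, ∀ i : {j // j ∈ P.loc (Event.act e)}, s' i.1 = e.tgt i) ∧
    ∀ j, j ∉ P.locU u → s' j = s j

/-- `s'` is a successor of `s`. -/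
def isSuccessor (P : PAS n A S) (s s' : ∀ i, S i) : Prop :=
  ∃ u, P.isMaxStep u s ∧ P.uSucc u s s'

/-- `s` is a deadlock iff no event is enabled at `s`. -/
def isDeadlock (P : PAS n A S) (s : ∀ i, S i) : Prop :=
  ¬ ∃ e : P.Event, e.enabled s

/-- `act(x)` for a local state `x ∈ S i`. -/
def actSet (P : PAS n A S) (i : Fin n) (x : S i) : Set A :=
  {a | ∃ h : i ∈ P.loc a, ∃ v ∈ P.en a, v ⟨i, h⟩ = x}

/-- A DMC: for every agent `i` and local state `x`, `|act(x)| = 1`. -/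
def isDMC (P : PAS n A S) : Prop :=
  ∀ (i : Fin n) (x : S i), ∃! a : A, a ∈ P.actSet i x


/-- The event `(s_a, a, v')` determined by an enabled action `a` and a target
`a`-state `v'` of positive probability. -/
def mkEv (P : PAS n A S) (s : ∀ i, S i) (a : A) (h : P.enabledA a s)
    (v' : ∀ i : {j // j ∈ P.loc a}, S i.1) (hv : 0 < P.prob a (P.projA a s) v') :
    P.Event :=
  ⟨a, P.projA a s, v', h, hv⟩

/-- In a DMC, enabled actions sharing an agent coincide. -/
theorem isDMC.eq_of_mem_loc {P : PAS n A S} (hP : P.isDMC) {s : ∀ i, S i} {a b : A}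
    (ha : P.enabledA a s) (hb : P.enabledA b s) {i : Fin n} (hia : i ∈ P.loc a)
    (hib : i ∈ P.loc b) : a = b :=
  (hP i (s i)).unique ⟨hia, _, ha, rfl⟩ ⟨hib, _, hb, rfl⟩

theorem isDMC.indep_of_act_ne {P : PAS n A S} (hP : P.isDMC) {s : ∀ i, S i} {e e' : P.Event}
    (he : e.enabled s) (he' : e'.enabled s) (h : e.act ≠ e'.act) : indep e e' := by
  refine Finset.eq_empty_of_forall_notMem fun i hi => h ?_
  rw [Finset.mem_inter] at hi
  refine hP.eq_of_mem_loc (s := s) ?_ ?_ hi.1 hi.2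
  · rw [enabledA, he]; exact e.src_en
  · rw [enabledA, he']; exact e'.src_en

theorem act_ne_of_indep {P : PAS n A S} {e e' : P.Event} (h : indep e e') : e.act ≠ e'.act := by
  intro hact
  obtain ⟨i, hi⟩ := P.loc_nonempty e.act
  have : i ∈ P.loc e.act ∩ P.loc e'.act := Finset.mem_inter.2 ⟨hi, hact ▸ hi⟩
  rw [h] at this
  simp at this

/-- An event enabled at `s` is of the form `(s_a, a, v')` with `a` enabled at `s`. -/
theorem Event.enabled.exists_eq_mkEv {P : PAS n A S} {s : ∀ i, S i} {e : P.Event}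
    (he : e.enabled s) : ∃ a h v' hv, e = P.mkEv s a h v' hv := by
  obtain ⟨a, v, v', hv, hp⟩ := e
  obtain rfl : P.projA a s = v := he
  exact ⟨a, hv, v', hp, rfl⟩

theorem exists_prob_pos (P : PAS n A S) {a : A} {v : ∀ i : {j // j ∈ P.loc a}, S i.1}
    (hv : v ∈ P.en a) : ∃ v', 0 < P.prob a v v' := by
  by_contra! h
  have := P.prob_sum a v hv
  linarith [Finset.sum_nonpos fun v' (_ : v' ∈ Finset.univ) => h v']

/-- The functions assigning to each enabled action a target of positive probability. -/
abbrev Choice (P : PAS n A S) (s : ∀ i, S i) : Type :=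
  {c : ∀ (a : A), P.enabledA a s → (∀ i : {j // j ∈ P.loc a}, S i.1) //
    ∀ a h, 0 < P.prob a (P.projA a s) (c a h)}

/-- The step consisting of the events selected by a choice function. -/
abbrev Choice.step {P : PAS n A S} {s : ∀ i, S i} (c : P.Choice s) : Set P.Event :=
  Set.range (fun a : {a : A // P.enabledA a s} =>
    P.mkEv s a.1 a.2 (c.1 a.1 a.2) (c.2 a.1 a.2))

theorem Choice.isMaxStep_step {P : PAS n A S} (hP : P.isDMC) {s : ∀ i, S i}
    (hnd : ¬ P.isDeadlock s) (c : P.Choice s) : P.isMaxStep c.step s := by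
  have hen : ∀ e ∈ c.step, Event.enabled e s := by
    rintro _ ⟨a, rfl⟩
    rfl
  refine ⟨⟨Set.finite_range _, ?_, hen, ?_⟩, ?_⟩
  · obtain ⟨e, he⟩ := not_not.1 hnd
    obtain ⟨a, h, -⟩ := Event.enabled.exists_eq_mkEv he
    exact ⟨_, ⟨a, h⟩, rfl⟩
  · rintro _ ⟨a, rfl⟩ _ ⟨b, rfl⟩ hne
    refine hP.indep_of_act_ne (s := s) rfl rfl fun hab => hne ?_
    obtain rfl : a = b := Subtype.ext hab
    rfl
  · rintro e he ⟨-, -, hen', hind⟩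
    obtain ⟨a, h, v', hv, rfl⟩ := Event.enabled.exists_eq_mkEv (hen' e (Set.mem_insert _ _))
    have hmem : P.mkEv s a h (c.1 a h) (c.2 a h) ∈ c.step := ⟨⟨a, h⟩, rfl⟩
    exact act_ne_of_indep (hind _ (Set.mem_insert _ _) _ (Set.mem_insert_of_mem _ hmem)
      fun heq => he (heq ▸ hmem)) rfl

/-- In a DMC, a maximal step contains an event for every enabled action. -/
theorem isMaxStep.exists_mkEv_mem {P : PAS n A S} (hP : P.isDMC) {s : ∀ i, S i}
    {u : Set P.Event} (hu : P.isMaxStep u s) (a : A) (h : P.enabledA a s) :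
    ∃ v' hv, P.mkEv s a h v' hv ∈ u := by
  obtain ⟨⟨hfin, -, hen, hind⟩, hmax⟩ := hu
  by_contra! hno
  obtain ⟨v', hv⟩ := P.exists_prob_pos h
  have hact : ∀ e ∈ u, a ≠ e.act := by
    intro e he hae
    obtain ⟨b, hb, w, hw, rfl⟩ := Event.enabled.exists_eq_mkEv (hen e he)
    obtain rfl : a = b := hae
    exact hno w hw he
  refine hmax _ (hno v' hv) ⟨hfin.insert _, Set.insert_nonempty _ _, ?_, ?_⟩
  · rintro e (rfl | he)
    exacts [rfl, hen e he]
  · rintro e (rfl | he) e' (rfl | he') hne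
    · exact absurd rfl hne
    · exact hP.indep_of_act_ne (s := s) rfl (hen _ he') (hact _ he')
    · exact hP.indep_of_act_ne (s := s) (hen _ he) rfl (hact _ he).symm
    · exact hind _ he _ he' hne

theorem isMaxStep.exists_eq_step {P : PAS n A S} (hP : P.isDMC) {s : ∀ i, S i}
    {u : Set P.Event} (hu : P.isMaxStep u s) : ∃ c : P.Choice s, u = c.step := by
  choose c hc hmem using hu.exists_mkEv_mem hP
  refine ⟨⟨c, hc⟩, Set.Subset.antisymm (fun e he => ?_) ?_⟩
  · obtain ⟨a, h, v', hv, rfl⟩ := Event.enabled.exists_eq_mkEv (hu.1.2.2.1 e he)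
    refine ⟨⟨a, h⟩, ?_⟩
    by_contra hne
    exact act_ne_of_indep (hu.1.2.2.2 _ (hmem a h) _ he hne) rfl
  · rintro _ ⟨a, rfl⟩
    exact hmem a.1 a.2

theorem uSucc.unique {P : PAS n A S} {u : Set P.Event} {s s₁ s₂ : ∀ i, S i}
    (h₁ : P.uSucc u s s₁) (h₂ : P.uSucc u s s₂) : s₁ = s₂ := by
  funext j
  by_cases hj : j ∈ P.locU u
  · obtain ⟨e, he, hje⟩ := Set.mem_iUnion₂.1 hj
    exact (h₁.1 e he ⟨j, hje⟩).trans (h₂.1 e he ⟨j, hje⟩).symm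
  · rw [h₁.2 j hj, h₂.2 j hj]

/-- Choice functions as sections of the family of positive-probability targets. -/
def choiceEquivPi (P : PAS n A S) (s : ∀ i, S i) :
    P.Choice s ≃ ∀ a : {a | P.enabledA a s},
      {v' : ∀ i : {j // j ∈ P.loc a.1}, S i.1 | 0 < P.prob a (P.projA a s) v'} where
  toFun c a := ⟨c.1 a.1 a.2, c.2 a.1 a.2⟩
  invFun f := ⟨fun a h => (f ⟨a, h⟩).1, fun a h => (f ⟨a, h⟩).2⟩
  left_inv _ := rfl
  right_inv _ := rfl

/-- Enabled events as pairs of an enabled action and a positive-probability target. -/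
noncomputable def sigmaEquivEnabled (P : PAS n A S) (s : ∀ i, S i) :
    (Σ a : {a | P.enabledA a s},
      {v' : ∀ i : {j // j ∈ P.loc a.1}, S i.1 | 0 < P.prob a (P.projA a s) v'}) ≃
    {e : P.Event | e.enabled s} :=
  Equiv.ofBijective (fun x => ⟨P.mkEv s x.1.1 x.1.2 x.2.1 x.2.2, rfl⟩) <| by
    constructor
    · rintro ⟨⟨a, h⟩, v, hv⟩ ⟨⟨b, h'⟩, w, hw⟩ heq
      cases heq
      rfl
    · rintro ⟨e, he⟩
      obtain ⟨a, h, v', hv, rfl⟩ := Event.enabled.exists_eq_mkEv he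
      exact ⟨⟨⟨a, h⟩, v', hv⟩, rfl⟩

theorem stmt9 (P : PAS n A S) (hP : P.isDMC) (s : ∀ i, S i)
    (hnd : ¬ P.isDeadlock s)
    (Φ : {c : ∀ (a : A), P.enabledA a s → (∀ i : {j // j ∈ P.loc a}, S i.1) //
          ∀ a h, 0 < P.prob a (P.projA a s) (c a h)} → (∀ i, S i))
    (hΦ : ∀ c : {c : ∀ (a : A), P.enabledA a s → (∀ i : {j // j ∈ P.loc a}, S i.1) //
          ∀ a h, 0 < P.prob a (P.projA a s) (c a h)}, P.uSucc
        (Set.range (fun a : {a : A // P.enabledA a s} =>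
          P.mkEv s a.1 a.2 (c.1 a.1 a.2) (c.2 a.1 a.2))) s (Φ c)) :
    (∀ c : {c : ∀ (a : A), P.enabledA a s → (∀ i : {j // j ∈ P.loc a}, S i.1) //
          ∀ a h, 0 < P.prob a (P.projA a s) (c a h)}, P.isMaxStep
        (Set.range (fun a : {a : A // P.enabledA a s} =>
          P.mkEv s a.1 a.2 (c.1 a.1 a.2) (c.2 a.1 a.2))) s) ∧
    Set.BijOn Φ Set.univ {s' | P.isSuccessor s s'} ∧
    {s' : ∀ i, S i | P.isSuccessor s s'}.ncard =
      ∏ᶠ a ∈ {a : A | P.enabledA a s},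
        {v' : ∀ i : {j // j ∈ P.loc a}, S i.1 | 0 < P.prob a (P.projA a s) v'}.ncard ∧
    {e : P.Event | e.enabled s}.ncard =
      ∑ᶠ a ∈ {a : A | P.enabledA a s},
        {v' : ∀ i : {j // j ∈ P.loc a}, S i.1 | 0 < P.prob a (P.projA a s) v'}.ncard := by
  have hmax : ∀ c : P.Choice s, P.isMaxStep c.step s := Choice.isMaxStep_step hP hnd
  have hbij : Set.BijOn Φ Set.univ {s' | P.isSuccessor s s'} := by
    refine ⟨fun c _ => ⟨_, hmax c, hΦ c⟩, fun c _ d _ hcd => ?_, ?_⟩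
    · refine Subtype.ext (funext fun a => funext fun h => funext fun i => ?_)
      have hc := (hΦ c).1 _ ⟨⟨a, h⟩, rfl⟩ i
      rw [hcd] at hc
      exact hc.symm.trans ((hΦ d).1 _ ⟨⟨a, h⟩, rfl⟩ i)
    · rintro s' ⟨u, hu, hs'⟩
      obtain ⟨c, rfl⟩ := hu.exists_eq_step hP
      exact ⟨c, trivial, (hΦ c).unique hs'⟩
  have := Fintype.ofFinite {a | P.enabledA a s}
  refine ⟨hmax, hbij, ?_, ?_⟩
  · rw [← hbij.image_eq, hbij.injOn.ncard_image, Set.ncard_univ,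
      Nat.card_congr (P.choiceEquivPi s), Nat.card_pi, ← finprod_set_coe_eq_finprod_mem,
      finprod_eq_prod_of_fintype]
    rfl
  · rw [← Nat.card_coe_set_eq, ← Nat.card_congr (P.sigmaEquivEnabled s), Nat.card_sigma,
      ← finsum_set_coe_eq_finsum_mem, finsum_eq_sum_of_fintype]
    rfl

end PAS
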